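/- Let k ≥ 1, let X be a finite-dimensional real inner product space, let g_i : X → EReal be lower semicontinuous functions never taking the value −∞, and let ω_1, …, ω_k ∈ (0,1] with Σ_{i=1}^k ω_i = 1. Let σ, τ > 0 satisfy στ < 1 and suppose there exist x̂ ∈ X and ŷ_1, …, ŷ_k ∈ X with ŷ_i ∈ ∂g_i(x̂) for every i and Σ_{i=1}^k ω_i ŷ_i = 0. Let sequences (x^n), (x̄^n), (y_i^n) in X satisfy x̄^0 = x^0 and, for every n ≥ 0: y_i^{n+1} ∈ ∂g_i(σ^{-1}(y_i^n + σ x̄^n − y_i^{n+1})) for each i; x^{n+1} = x^n − τ Σ_{i=1}^k ω_i y_i^{n+1}; x̄^{n+1} = 2x^{n+1} − x^n. Then there exist x* ∈ X and y_1*, …, y_k* ∈ X with y_i* ∈ ∂g_i(x*) for every i and Σ_{i=1}^k ω_i y_i* = 0, such that x^n → x* and y_i^n → y_i* for every i; in particular x* is a minimizer of x ↦ Σ_{i=1}^k ω_i · g_i(x) over X. -/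

import Mathlib

/-!
The iteration is a proximal point method in a modified metric. Writing `z n = (x n, y (n+1))`, the
recursion says `M (z n - z (n+1)) ∈ T (z (n+1))`, where `T` is the monotone operator whose zeros are
the solutions of the optimality system and `M` is the self-adjoint operator with quadratic form
`pdForm`. As `σ * τ < 1` and the weights sum to one, `M` is positive definite
(`pdForm_coercive`). Monotonicity of subgradients gives the Fejér inequality
`D (z (n+1) - s) + D (z n - z (n+1)) ≤ D (z n - s)` for every solution `s`, with `D = pdForm`
(`fejer_step`). Closedness of the graph of the subdifferential of a lower semicontinuous function
(`subgrad_closed`) shows that cluster points of `z` are solutions, and the usual Opial argument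
(`fejer_convergence`) upgrades this to convergence of the whole sequence. Summing the subgradient
inequalities at the limit yields minimality.
-/

open RealInnerProductSpace Filter

/-- `u` is a subgradient of the extended-real-valued function `f` at `x`:
`f x` is finite and `f z ≥ f x + ⟪u, z - x⟫` for all `z`. -/
def Subgrad {Z : Type*} [NormedAddCommGroup Z] [InnerProductSpace ℝ Z]
    (f : Z → EReal) (x u : Z) : Prop :=
  ∃ r : ℝ, f x = (r : EReal) ∧ ∀ z : Z, ((r + ⟪u, z - x⟫ : ℝ) : EReal) ≤ f z

section Aux

variable {X : Type*} [NormedAddCommGroup X] [InnerProductSpace ℝ X]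

lemma subgrad_mono {f : X → EReal} {a b u v : X} (hu : Subgrad f a u) (hv : Subgrad f b v) :
    0 ≤ ⟪a - b, u - v⟫ := by
  obtain ⟨r, hr, h1⟩ := hu
  obtain ⟨s, hs, h2⟩ := hv
  have h1 := h1 b
  have h2 := h2 a
  rw [hs] at h1
  rw [hr] at h2
  have h1 := EReal.coe_le_coe_iff.1 h1
  have h2 := EReal.coe_le_coe_iff.1 h2
  simp only [inner_sub_right, inner_sub_left] at *
  linarith [real_inner_comm a u, real_inner_comm a v, real_inner_comm b u, real_inner_comm b v]

/-- The graph of the subdifferential of a proper lower semicontinuous function is sequentially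
closed. Convexity is not needed. -/
lemma subgrad_closed {f : X → EReal} (hf : LowerSemicontinuous f) (hbot : ∀ z, f z ≠ ⊥)
    {c : X} {rc : ℝ} (hc : f c = rc) {a u : X} {p v : ℕ → X}
    (hp : Tendsto p atTop (nhds a)) (hv : Tendsto v atTop (nhds u))
    (h : ∀ n, Subgrad f (p n) (v n)) : Subgrad f a u := by
  have key : ∀ z (t : ℝ), f z = t → f a ≤ ((t - ⟪u, z - a⟫ : ℝ) : EReal) := by
    intro z t hz
    by_contra! hlt
    obtain ⟨q, hq1, hq2⟩ := EReal.lt_iff_exists_real_btwn.1 hlt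
    have hq1 := EReal.coe_lt_coe_iff.1 hq1
    have e1 : ∀ᶠ n in atTop, (q : EReal) < f (p n) := hp.eventually (hf a _ hq2)
    have e2 : Tendsto (fun n => t - ⟪v n, z - p n⟫) atTop (nhds (t - ⟪u, z - a⟫)) :=
      tendsto_const_nhds.sub (hv.inner (tendsto_const_nhds.sub hp))
    obtain ⟨n, h1, h2⟩ := (e1.and (e2.eventually_lt_const hq1)).exists
    obtain ⟨r, hr, h3⟩ := h n
    have h3 := h3 z
    rw [hz] at h3
    rw [hr] at h1
    have h3 := EReal.coe_le_coe_iff.1 h3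
    have h1 := EReal.coe_lt_coe_iff.1 h1
    linarith
  have htop : f a ≠ ⊤ := ne_top_of_le_ne_top (EReal.coe_ne_top _) (key c rc hc)
  refine ⟨(f a).toReal, (EReal.coe_toReal htop (hbot a)).symm, fun z => ?_⟩
  by_cases hz : f z = ⊤
  · rw [hz]; exact le_top
  · have hz' := (EReal.coe_toReal hz (hbot z)).symm
    have h1 := key z _ hz'
    rw [← EReal.coe_toReal htop (hbot a)] at h1
    have h1 := EReal.coe_le_coe_iff.1 h1
    rw [hz']
    apply EReal.coe_le_coe_iff.2
    linarith

/-- Opial-type convergence principle: a sequence that is Fejér monotone, with a decrease controlled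
by its increments, for a continuous coercive `D`, converges as soon as its cluster points along
which the increments vanish belong to the (nonempty) target set `S`. -/
lemma fejer_convergence {W : Type*} [NormedAddCommGroup W] [ProperSpace W]
    (D : W → ℝ) (hD : Continuous D) (hD0 : D 0 = 0) (c : ℝ) (hc : 0 < c)
    (hcoer : ∀ w, c * ‖w‖ ^ 2 ≤ D w) (S : Set W) (hS : S.Nonempty) (z : ℕ → W)
    (hF : ∀ s ∈ S, ∀ n, D (z (n+1) - s) + D (z n - z (n+1)) ≤ D (z n - s))
    (hcl : ∀ (w : W) (φ : ℕ → ℕ), Tendsto (fun n => z (φ n)) atTop (nhds w) →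
      Tendsto (fun n => z (φ n + 1)) atTop (nhds w) → w ∈ S) :
    ∃ s ∈ S, Tendsto z atTop (nhds s) := by
  have hnn : ∀ w, 0 ≤ D w := fun w => le_trans (by positivity) (hcoer w)
  have hsmall : ∀ v : ℕ → W, Tendsto (fun n => D (v n)) atTop (nhds 0) →
      Tendsto v atTop (nhds 0) := by
    intro v hv
    have h1 : Tendsto (fun n => ‖v n‖ ^ 2) atTop (nhds 0) := by
      refine squeeze_zero (fun n => by positivity) (fun n => ?_)
        (by simpa using hv.const_mul c⁻¹ : Tendsto (fun n => c⁻¹ * D (v n)) atTop (nhds 0))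
      rw [inv_mul_eq_div, le_div_iff₀ hc, mul_comm]
      exact hcoer _
    rw [tendsto_zero_iff_norm_tendsto_zero]
    simpa [Real.sqrt_sq] using (h1.sqrt)
  have hanti : ∀ s ∈ S, Antitone (fun n => D (z n - s)) := fun s hs =>
    antitone_nat_of_succ_le fun n => by linarith [hF s hs n, hnn (z n - z (n+1))]
  have hconv : ∀ s ∈ S, Tendsto (fun n => D (z n - s)) atTop (nhds (⨅ n, D (z n - s))) :=
    fun s hs => tendsto_atTop_ciInf (hanti s hs) ⟨0, by rintro _ ⟨n, rfl⟩; exact hnn _⟩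
  obtain ⟨s, hs⟩ := hS
  have hinc : Tendsto (fun n => z n - z (n+1)) atTop (nhds 0) := by
    apply hsmall
    have h1 := (hconv s hs).sub ((hconv s hs).comp (tendsto_add_atTop_nat 1))
    rw [sub_self] at h1
    refine squeeze_zero (fun n => hnn _) (fun n => ?_) h1
    have := hF s hs n
    simp only [Function.comp]
    linarith
  have hbdd : ∀ n, z n ∈ Metric.closedBall s (Real.sqrt (D (z 0 - s) / c)) := by
    intro n
    rw [mem_closedBall_iff_norm]
    apply Real.le_sqrt_of_sq_le
    rw [le_div_iff₀ hc, mul_comm]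
    exact (hcoer _).trans (hanti s hs (Nat.zero_le n))
  obtain ⟨w, -, φ, hφ, hlim⟩ := (isCompact_closedBall s _).tendsto_subseq hbdd
  have hlim' : Tendsto (fun n => z (φ n + 1)) atTop (nhds w) := by
    have := hlim.sub (hinc.comp hφ.tendsto_atTop)
    simpa [Function.comp_def] using this
  have hw := hcl w φ hlim hlim'
  refine ⟨w, hw, ?_⟩
  have h0 : Tendsto (fun n => D (z (φ n) - w)) atTop (nhds 0) := by
    have h1 : Tendsto (fun n => z (φ n) - w) atTop (nhds 0) := by
      simpa using hlim.sub_const w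
    have := (hD.tendsto 0).comp h1
    rwa [hD0] at this
  have h2 := tendsto_nhds_unique ((hconv w hw).comp hφ.tendsto_atTop) h0
  have h3 := hconv w hw
  rw [h2] at h3
  exact tendsto_sub_nhds_zero_iff.1 (hsmall _ h3)

/-- The quadratic form of the primal-dual preconditioner on `X × X^k`, where the dual component
carries the `ω`-weighted inner product; the weights `ω` are meant to sum to one, so that the
`a`-term has total coefficient `τ⁻¹`. -/
noncomputable def pdForm {k : ℕ} (ω : Fin k → ℝ) (σ τ : ℝ) (w : X × (Fin k → X)) : ℝ :=
  ∑ i, ω i * (τ⁻¹ * ‖w.1‖ ^ 2 - 2 * ⟪w.1, w.2 i⟫ + σ⁻¹ * ‖w.2 i‖ ^ 2)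

lemma pdForm_continuous {k : ℕ} (ω : Fin k → ℝ) (σ τ : ℝ) :
    Continuous (pdForm (X := X) ω σ τ) := by
  unfold pdForm
  fun_prop

lemma quad_coercive {σ τ : ℝ} (hσ : 0 < σ) (hτ : 0 < τ) (hστ : σ * τ < 1) :
    ∃ c : ℝ, 0 < c ∧ ∀ a b : X,
      c * (‖a‖ ^ 2 + ‖b‖ ^ 2) ≤ τ⁻¹ * ‖a‖ ^ 2 - 2 * ⟪a, b⟫ + σ⁻¹ * ‖b‖ ^ 2 := by
  have h1 : σ < τ⁻¹ := by rwa [lt_inv_comm₀ hσ hτ, lt_inv_comm₀ hτ hσ, ← one_div, lt_div_iff₀ hτ]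
  -- Young's inequality `2⟪a, b⟫ ≤ s ‖a‖² + s⁻¹ ‖b‖²` leaves room in both terms if `σ < s < τ⁻¹`.
  obtain ⟨s, hs1, hs2⟩ := exists_between h1
  have hs : 0 < s := hσ.trans hs1
  have hs3 : s⁻¹ < σ⁻¹ := inv_strictAnti₀ hσ hs1
  refine ⟨min (τ⁻¹ - s) (σ⁻¹ - s⁻¹), lt_min (by linarith) (by linarith), fun a b => ?_⟩
  have hY : 2 * ⟪a, b⟫ ≤ s * ‖a‖ ^ 2 + s⁻¹ * ‖b‖ ^ 2 := by
    have h2 := real_inner_le_norm a b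
    have h3 : 0 ≤ s⁻¹ * (s * ‖a‖ - ‖b‖) ^ 2 := by positivity
    have h4 : s⁻¹ * (s * ‖a‖ - ‖b‖) ^ 2 = s * ‖a‖ ^ 2 - 2 * (‖a‖ * ‖b‖) + s⁻¹ * ‖b‖ ^ 2 := by
      field_simp
      ring
    linarith
  have h5 := mul_le_mul_of_nonneg_right (min_le_left (τ⁻¹ - s) (σ⁻¹ - s⁻¹)) (sq_nonneg ‖a‖)
  have h6 := mul_le_mul_of_nonneg_right (min_le_right (τ⁻¹ - s) (σ⁻¹ - s⁻¹)) (sq_nonneg ‖b‖)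
  linarith

lemma pdForm_coercive {k : ℕ} (hk : 1 ≤ k) {ω : Fin k → ℝ} (hω : ∀ i, 0 < ω i) {σ τ : ℝ}
    (hσ : 0 < σ) (hτ : 0 < τ) (hστ : σ * τ < 1) :
    ∃ c : ℝ, 0 < c ∧ ∀ w : X × (Fin k → X), c * ‖w‖ ^ 2 ≤ pdForm ω σ τ w := by
  obtain ⟨c, hc, h⟩ := quad_coercive (X := X) hσ hτ hστ
  have : Nonempty (Fin k) := ⟨⟨0, hk⟩⟩
  obtain ⟨j, hj⟩ := Finite.exists_min ω
  refine ⟨ω j * c, mul_pos (hω j) hc, fun w => ?_⟩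
  have hone : ∀ i, ω j * c * (‖w.1‖ ^ 2 + ‖w.2 i‖ ^ 2) ≤ pdForm ω σ τ w := by
    intro i
    have hnn : ∀ l, 0 ≤ ω l * (τ⁻¹ * ‖w.1‖ ^ 2 - 2 * ⟪w.1, w.2 l⟫ + σ⁻¹ * ‖w.2 l‖ ^ 2) :=
      fun l => mul_nonneg (hω l).le (le_trans (by positivity) (h w.1 (w.2 l)))
    refine le_trans ?_ (Finset.single_le_sum (fun l _ => hnn l) (Finset.mem_univ i))
    rw [mul_assoc]
    exact mul_le_mul (hj i) (h _ _) (by positivity) (hω i).le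
  have hpos : 0 < ω j * c := mul_pos (hω j) hc
  -- The norm of `X × X^k` is the sup norm, so it is attained at one of the components.
  obtain ⟨i, hi⟩ : ∃ i, ‖w.2‖ ≤ ‖w.2 i‖ := by
    obtain ⟨i, hi⟩ := Finite.exists_max (fun i => ‖w.2 i‖)
    exact ⟨i, (pi_norm_le_iff_of_nonneg (norm_nonneg _)).2 hi⟩
  have hle : ‖w‖ ^ 2 ≤ ‖w.1‖ ^ 2 + ‖w.2 i‖ ^ 2 := by
    rw [Prod.norm_def]
    rcases max_choice ‖w.1‖ ‖w.2‖ with hm | hm <;> rw [hm]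
    · nlinarith [sq_nonneg ‖w.2 i‖]
    · nlinarith [sq_nonneg ‖w.1‖, norm_nonneg w.2]
  exact (mul_le_mul_of_nonneg_left hle hpos.le).trans (hone i)

/-- The Fejér inequality for one step `(x₀, y₁) ↦ (x₁, y₂)` of the iteration; `p i` is the point
at which `y₂ i` is a subgradient. -/
lemma fejer_step {k : ℕ} {ω : Fin k → ℝ} (hω : ∀ i, 0 < ω i) (hωsum : ∑ i, ω i = 1) {σ τ : ℝ}
    (hτ : 0 < τ) {xh x₀ x₁ : X} {yh y₁ y₂ p : Fin k → X}
    (hyh : ∑ i, ω i • yh i = 0) (hx : x₁ = x₀ - τ • ∑ i, ω i • y₁ i)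
    (hp : ∀ i, p i = σ⁻¹ • (y₁ i - y₂ i) + ((2:ℝ) • x₁ - x₀))
    (hmono : ∀ i, 0 ≤ ⟪p i - xh, y₂ i - yh i⟫) :
    pdForm ω σ τ ((x₁, y₂) - (xh, yh)) + pdForm ω σ τ ((x₀, y₁) - (x₁, y₂)) ≤
      pdForm ω σ τ ((x₀, y₁) - (xh, yh)) := by
  have hdx : τ⁻¹ • (x₀ - x₁) = ∑ i, ω i • (y₁ i - yh i) := by
    simp only [smul_sub, Finset.sum_sub_distrib, hyh, sub_zero]
    rw [← smul_sub, hx, sub_sub_cancel, inv_smul_smul₀ hτ.ne']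
  -- The primal part of the cross term vanishes by the update rule for `x`.
  have hzero : ∑ i, ω i * (⟪τ⁻¹ • (x₀ - x₁), x₁ - xh⟫ - ⟪y₁ i - yh i, x₁ - xh⟫) = 0 := by
    simp only [mul_sub, Finset.sum_sub_distrib, ← Finset.sum_mul, hωsum, one_mul]
    rw [hdx, sum_inner]
    simp only [real_inner_smul_left, sub_self]
  have hpt : ∀ i,
      (τ⁻¹ * ‖x₀ - xh‖ ^ 2 - 2 * ⟪x₀ - xh, y₁ i - yh i⟫ + σ⁻¹ * ‖y₁ i - yh i‖ ^ 2)
        = (τ⁻¹ * ‖x₁ - xh‖ ^ 2 - 2 * ⟪x₁ - xh, y₂ i - yh i⟫ + σ⁻¹ * ‖y₂ i - yh i‖ ^ 2)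
        + (τ⁻¹ * ‖x₀ - x₁‖ ^ 2 - 2 * ⟪x₀ - x₁, y₁ i - y₂ i⟫ + σ⁻¹ * ‖y₁ i - y₂ i‖ ^ 2)
        + 2 * ⟪p i - xh, y₂ i - yh i⟫
        + 2 * (⟪τ⁻¹ • (x₀ - x₁), x₁ - xh⟫ - ⟪y₁ i - yh i, x₁ - xh⟫) := by
    intro i
    obtain ⟨d, hd⟩ : ∃ d, d = x₀ - x₁ := ⟨_, rfl⟩
    obtain ⟨a, ha⟩ : ∃ a, a = x₁ - xh := ⟨_, rfl⟩
    obtain ⟨e, he⟩ : ∃ e, e = y₁ i - y₂ i := ⟨_, rfl⟩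
    obtain ⟨b, hb⟩ : ∃ b, b = y₂ i - yh i := ⟨_, rfl⟩
    have r1 : x₀ - xh = d + a := by rw [hd, ha]; abel
    have r2 : y₁ i - yh i = e + b := by rw [he, hb]; abel
    have r3 : p i - xh = σ⁻¹ • e - d + a := by rw [hp, hd, ha, he, two_smul]; abel
    rw [r1, r2, r3, ← hd, ← ha, ← he, ← hb]
    simp only [norm_add_sq_real, inner_add_left, inner_add_right, inner_sub_left,
      real_inner_smul_left]
    rw [real_inner_comm e a, real_inner_comm b a]
    ring
  unfold pdForm
  simp only [Prod.mk_sub_mk, Pi.sub_apply, hpt]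
  have hsum : 0 ≤ ∑ i, ω i * ⟪p i - xh, y₂ i - yh i⟫ :=
    Finset.sum_nonneg fun i _ => mul_nonneg (hω i).le (hmono i)
  have hsplit : ∀ A B C E : Fin k → ℝ, ∑ i, ω i * (A i + B i + 2 * C i + 2 * E i) =
      ∑ i, ω i * A i + ∑ i, ω i * B i + 2 * ∑ i, ω i * C i + 2 * ∑ i, ω i * E i := by
    intro A B C E
    simp only [Finset.mul_sum, ← Finset.sum_add_distrib]
    exact Finset.sum_congr rfl fun i _ => by ring
  rw [hsplit _ _ (fun i => ⟪p i - xh, y₂ i - yh i⟫)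
    (fun i => ⟪τ⁻¹ • (x₀ - x₁), x₁ - xh⟫ - ⟪y₁ i - yh i, x₁ - xh⟫), hzero]
  linarith

lemma weighted_sum_min {k : ℕ} {g : Fin k → X → EReal} {ω : Fin k → ℝ} (hω : ∀ i, 0 < ω i)
    {xs : X} {ys : Fin k → X} (h : ∀ i, Subgrad (g i) xs (ys i)) (hys : ∑ i, ω i • ys i = 0)
    (z : X) : ∑ i, ((ω i : ℝ) : EReal) * g i xs ≤ ∑ i, ((ω i : ℝ) : EReal) * g i z := by
  choose r hr hle using h
  have hcoe : ∀ a : Fin k → ℝ, ∑ i, ((a i : ℝ) : EReal) = ((∑ i, a i : ℝ) : EReal) :=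
    fun a => (map_sum (⟨⟨Real.toEReal, rfl⟩, EReal.coe_add⟩ : ℝ →+ EReal) a Finset.univ).symm
  have h0 : ∑ i, ω i * ⟪ys i, z - xs⟫ = 0 := by
    simp only [← real_inner_smul_left, ← sum_inner, hys, inner_zero_left]
  calc ∑ i, ((ω i : ℝ) : EReal) * g i xs
      = ∑ i, ((ω i * (r i + ⟪ys i, z - xs⟫) : ℝ) : EReal) := by
        rw [hcoe]
        simp only [hr, ← EReal.coe_mul, mul_add, Finset.sum_add_distrib, h0, add_zero]
        rw [hcoe]
    _ ≤ _ := Finset.sum_le_sum fun i _ => by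
        rw [EReal.coe_mul]
        exact mul_le_mul_of_nonneg_left (hle i z) (EReal.coe_nonneg.2 (hω i).le)

end Aux

theorem stmt_14
    {k : ℕ} (hk : 1 ≤ k)
    {X : Type*} [NormedAddCommGroup X] [InnerProductSpace ℝ X] [FiniteDimensional ℝ X]
    (g : Fin k → X → EReal)
    (hg_lsc : ∀ i, LowerSemicontinuous (g i)) (hg_bot : ∀ i, ∀ z, g i z ≠ ⊥)
    (ω : Fin k → ℝ) (hω : ∀ i, 0 < ω i ∧ ω i ≤ 1) (hωsum : ∑ i, ω i = 1)
    (σ τ : ℝ) (hσ : 0 < σ) (hτ : 0 < τ) (hστ : σ * τ < 1)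
    (hopt : ∃ (xh : X) (yh : Fin k → X),
      (∀ i, Subgrad (g i) xh (yh i)) ∧ ∑ i, ω i • yh i = 0)
    (x xb : ℕ → X) (y : ℕ → Fin k → X)
    (hxb0 : xb 0 = x 0)
    (hy : ∀ (n : ℕ) (i : Fin k),
      Subgrad (g i) (σ⁻¹ • (y n i + σ • xb n - y (n+1) i)) (y (n+1) i))
    (hx : ∀ n : ℕ, x (n+1) = x n - τ • ∑ i, ω i • y (n+1) i)
    (hxbn : ∀ n : ℕ, xb (n+1) = (2:ℝ) • x (n+1) - x n) :
    ∃ (xs : X) (ys : Fin k → X),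
      (∀ i, Subgrad (g i) xs (ys i)) ∧ ∑ i, ω i • ys i = 0 ∧
      Tendsto x atTop (nhds xs) ∧
      (∀ i, Tendsto (fun n => y n i) atTop (nhds (ys i))) ∧
      ∀ z : X, ∑ i, ((ω i : ℝ) : EReal) * g i xs ≤ ∑ i, ((ω i : ℝ) : EReal) * g i z := by
  have hωp : ∀ i, 0 < ω i := fun i => (hω i).1
  obtain ⟨c, hc, hcoer⟩ := pdForm_coercive (X := X) hk hωp hσ hτ hστ
  obtain ⟨xh, yh, hh, hyh⟩ := hopt
  have hp : ∀ n i, σ⁻¹ • (y (n+1) i + σ • xb (n+1) - y (n+1+1) i)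
      = σ⁻¹ • (y (n+1) i - y (n+1+1) i) + ((2:ℝ) • x (n+1) - x n) := by
    intro n i
    rw [add_sub_right_comm, smul_add, inv_smul_smul₀ hσ.ne', hxbn]
  have : ProperSpace X := FiniteDimensional.proper ℝ X
  obtain ⟨⟨xs, ys⟩, ⟨hs1, hs2⟩, hlim⟩ := fejer_convergence (pdForm ω σ τ)
    (pdForm_continuous ω σ τ) (by simp [pdForm]) c hc hcoer
    {w : X × (Fin k → X) | (∀ i, Subgrad (g i) w.1 (w.2 i)) ∧ ∑ i, ω i • w.2 i = 0}
    ⟨(xh, yh), hh, hyh⟩ (fun n => (x n, y (n+1)))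
    (by
      rintro ⟨xh, yh⟩ ⟨hh, hyh⟩ n
      exact fejer_step hωp hωsum hτ hyh (hx n) (hp n)
        (fun i => subgrad_mono (hy (n+1) i) (hh i)))
    (by
      rintro ⟨a, b⟩ φ h1 h2
      have hx1 : Tendsto (fun n => x (φ n)) atTop (nhds a) := h1.fst_nhds
      have hx2 : Tendsto (fun n => x (φ n + 1)) atTop (nhds a) := h2.fst_nhds
      have hy1 : ∀ i, Tendsto (fun n => y (φ n + 1) i) atTop (nhds (b i)) :=
        tendsto_pi_nhds.1 h1.snd_nhds
      have hy2 : ∀ i, Tendsto (fun n => y (φ n + 1 + 1) i) atTop (nhds (b i)) :=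
        tendsto_pi_nhds.1 h2.snd_nhds
      refine ⟨fun i => ?_, ?_⟩
      · obtain ⟨rc, hrc, -⟩ := hh i
        refine subgrad_closed (hg_lsc i) (hg_bot i) hrc ?_ (hy2 i) (fun n => hy (φ n + 1) i)
        simp only [hp]
        have := (((hy1 i).sub (hy2 i)).const_smul σ⁻¹).add ((hx2.const_smul (2:ℝ)).sub hx1)
        simpa [two_smul] using this
      · have e1 : Tendsto (fun n => x (φ n + 1)) atTop (nhds (a - τ • ∑ i, ω i • b i)) := by
          simp only [hx]
          exact hx1.sub ((tendsto_finsetSum _ fun i _ => (hy1 i).const_smul (ω i)).const_smul τ)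
        have e2 := tendsto_nhds_unique e1 hx2
        rw [sub_eq_self, smul_eq_zero] at e2
        exact e2.resolve_left hτ.ne')
  refine ⟨xs, ys, hs1, hs2, hlim.fst_nhds, fun i => ?_, weighted_sum_min hωp hs1 hs2⟩
  have h1 : Tendsto (fun n => y (n+1) i) atTop (nhds (ys i)) :=
    tendsto_pi_nhds.1 hlim.snd_nhds i
  exact (tendsto_add_atTop_iff_nat 1).1 h1
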